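/- For an IALM sequence with errors and penalty parameters satisfying (A1)–(A5), if the value function ν is subdifferentiable at s̄ (i.e. there exists λ̄ ∈ Y with ν(s) ≥ ν(s̄) + ⟨λ̄, s − s̄⟩ for all s ∈ Y), then the algorithm quantitatively converges to the closest feasible problem: f(x^k) → ν(s̄) with |f(x^k) − ν(s̄)| = O(1/√(∑_{i=0}^{k−1} γ_i)); C(x^k) − y^k → s̄ with ‖C(x^k) − y^k − s̄‖ = O(1/√(∑_{i=0}^{k−1} γ_i)); and ‖y^k − Proj_K(C(x^k))‖ = O(1/√(∑_{i=0}^{k−1} γ_i)). -/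

import Mathlib

open scoped RealInnerProductSpace
open Filter Asymptotics

noncomputable section

/-- The negative dual function `h(l) = sup_{(x,s) ∈ 𝒞} (⟪l, s⟫ − f x)`. -/
def negDual {E Y : Type*} [NormedAddCommGroup Y] [InnerProductSpace ℝ Y]
    (f : E → EReal) (CC : Set (E × Y)) (l : Y) : EReal :=
  ⨆ (p : E × Y) (_ : p ∈ CC), ((⟪l, p.2⟫ : ℝ) : EReal) - f p.1

/-- The value function of the shifted problem: `ν(s̃) = inf { f x | (x, s̃) ∈ 𝒞 }`. -/
def valueFn {E Y : Type*} (f : E → EReal) (CC : Set (E × Y)) (st : Y) : EReal :=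
  ⨅ (x : E) (_ : (x, st) ∈ CC), f x

/-!
Only the pairs (constraint value, objective value) matter, so `x` is eliminated and the method is
studied over a closed convex set `G` of such pairs, essentially the epigraph of the value function.
There the augmented Lagrangian is strongly convex in the constraint value. Its exact minimizer
`z k` is therefore a proximal step, and quadratic growth puts the inexact iterate within
`ε (k + 1) / γ k` of `z k` and its multiplier within `ε (k + 1)` of the exact one.

When the problem is infeasible the multipliers drift like `-(∑ γ) • sbar`. Removing this drift
leaves a sequence which an exact step does not move away from `lbar`, hence a bounded one as the
errors are summable. The gap `‖z k‖ ^ 2 - ‖sbar‖ ^ 2` is decreasing up to summable errors, and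
`γ (k + 1)` times it is controlled by the decrease of the negative dual function at the exact
multipliers. So `(∑ γ) * gap + dual` is a Lyapunov function, whose boundedness gives
`gap = O(1 / ∑ γ)`.

Since `‖s - sbar‖ ^ 2 ≤ ‖s‖ ^ 2 - ‖sbar‖ ^ 2` for all attainable constraint values `s`, the
iterates approach `sbar` at the square root of that rate, and so does every attainable sequence
of no larger norm, in particular the one obtained by projecting onto `K`. The objective values are
bounded below by the subgradient inequality and above by comparison with the closest solution.
-/

section RealSequences

lemma bddAbove_range_of_succ_le_add {u c : ℕ → ℝ} (hc : ∀ k, 0 ≤ c k) (hsum : Summable c)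
    (hu : ∀ k, u (k + 1) ≤ u k + c k) : BddAbove (Set.range u) := by
  have partial_sum_bound : ∀ k, u k ≤ u 0 + ∑ i ∈ Finset.range k, c i := by
    intro k
    induction k with
    | zero => simp
    | succ k ih => rw [Finset.sum_range_succ]; linarith [hu k]
  refine ⟨u 0 + ∑' i, c i, ?_⟩
  rintro _ ⟨k, rfl⟩
  linarith [partial_sum_bound k, hsum.sum_le_tsum (Finset.range k) fun i _ => hc i]

lemma isBigO_atTop_of_isBigO_succ {u v : ℕ → ℝ}
    (h : (fun k => u (k + 1)) =O[atTop] fun k => v (k + 1)) : u =O[atTop] v := by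
  rw [← map_add_atTop_eq_nat 1]
  exact isBigO_map.2 h

lemma isBigO_one_div_of_mul_le {ι : Type*} {l : Filter ι} {T u : ι → ℝ} {B : ℝ}
    (hT : ∀ i, 0 < T i) (hu : ∀ i, 0 ≤ u i) (hB : ∀ i, T i * u i ≤ B) :
    u =O[l] fun i => 1 / T i := by
  refine isBigO_of_le' (c := B) l fun i => ?_
  rw [Real.norm_of_nonneg (hu i), Real.norm_of_nonneg (one_div_nonneg.2 (hT i).le), mul_one_div,
    le_div_iff₀' (hT i)]
  exact hB i

lemma isBigO_one_div_sqrt_of_sq_le {ι : Type*} {l : Filter ι} {T u v : ι → ℝ}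
    (hT : ∀ i, 0 ≤ T i) (hu : ∀ i, 0 ≤ u i) (huv : ∀ i, u i ^ 2 ≤ v i)
    (hv : v =O[l] fun i => 1 / T i) : u =O[l] fun i => 1 / √(T i) := by
  have hsqrt : (fun i => √(v i)) =O[l] fun i => √(1 / T i) :=
    hv.sqrt (Eventually.of_forall fun i => one_div_nonneg.2 (hT i))
  simp only [Real.sqrt_div zero_le_one, Real.sqrt_one] at hsqrt
  refine IsBigO.trans (isBigO_of_le l fun i => ?_) hsqrt
  rw [Real.norm_of_nonneg (hu i), Real.norm_of_nonneg (Real.sqrt_nonneg _)]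
  exact Real.le_sqrt_of_sq_le (huv i)

variable {ι : Type*} {l : Filter ι} {T : ι → ℝ}

lemma tendsto_one_div_sqrt_zero (hT : Tendsto T l atTop) :
    Tendsto (fun i => 1 / √(T i)) l (nhds 0) :=
  (Real.tendsto_sqrt_atTop.comp hT).const_div_atTop 1

lemma isBigO_one_div_one_div_sqrt (hT : Tendsto T l atTop) :
    (fun i => 1 / T i) =O[l] fun i => 1 / √(T i) := by
  have hprod := (isBigO_refl (fun i => 1 / √(T i)) l).mul
    ((tendsto_one_div_sqrt_zero hT).isBigO_one ℝ)
  refine hprod.congr' ?_ (Eventually.of_forall fun i => mul_one _)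
  filter_upwards [hT.eventually_ge_atTop 0] with i hi
  rw [one_div_mul_one_div, Real.mul_self_sqrt hi]

lemma isBigO_one_div_of_mul_isBigO_one_div_sqrt {u : ι → ℝ} (hT : Tendsto T l atTop)
    (hu : (fun i => u i * T i) =O[l] fun i => 1 / √(T i)) : u =O[l] fun i => 1 / T i := by
  have hone : (fun i => u i * T i) =O[l] fun _ => (1 : ℝ) :=
    hu.trans ((tendsto_one_div_sqrt_zero hT).isBigO_one ℝ)
  refine (hone.mul (isBigO_refl (fun i => 1 / T i) l)).congr' ?_
    (Eventually.of_forall fun i => one_mul _)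
  filter_upwards [hT.eventually_gt_atTop 0] with i hi
  field_simp

end RealSequences

section InnerProduct

variable {Y : Type*} [NormedAddCommGroup Y] [InnerProductSpace ℝ Y]

lemma norm_sub_sq_le_sub_of_inner_nonneg {a b : Y} (h : 0 ≤ ⟪a, b - a⟫) :
    ‖b - a‖ ^ 2 ≤ ‖b‖ ^ 2 - ‖a‖ ^ 2 := by
  have expand := norm_add_sq_real a (b - a)
  rw [add_sub_cancel] at expand
  linarith

lemma norm_sub_smul_le_of_inner_nonneg {w u : Y} {g : ℝ} (hg : 0 ≤ g)
    (h : 0 ≤ ⟪w - g • u, u⟫) : ‖w - g • u‖ ≤ ‖w‖ := by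
  refine le_of_sq_le_sq ?_ (norm_nonneg w)
  have expand := norm_add_sq_real (w - g • u) (g • u)
  rw [sub_add_cancel, inner_smul_right] at expand
  nlinarith [mul_nonneg hg h, sq_nonneg ‖g • u‖]

lemma inner_sub_nonneg_of_norm_minimal {D : Set Y} (hD : Convex ℝ D) {a : Y} (ha : a ∈ D)
    (hmin : ∀ b ∈ D, ‖a‖ ≤ ‖b‖) {b : Y} (hb : b ∈ D) : 0 ≤ ⟪a, b - a⟫ := by
  have : Nonempty D := ⟨⟨a, ha⟩⟩
  have hinf : ‖(0 : Y) - a‖ = ⨅ c : D, ‖(0 : Y) - c‖ := by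
    refine le_antisymm (le_ciInf fun c => ?_)
      (ciInf_le ⟨0, Set.forall_mem_range.2 fun _ => norm_nonneg _⟩ (⟨a, ha⟩ : D))
    simpa only [zero_sub, norm_neg] using hmin c c.2
  have := (norm_eq_iInf_iff_real_inner_le_zero hD ha).1 hinf b hb
  rwa [zero_sub, inner_neg_left, neg_nonpos] at this

end InnerProduct

section AugmentedLagrangian

variable {Y : Type*} [NormedAddCommGroup Y] [InnerProductSpace ℝ Y]

/-- The augmented Lagrangian with penalty `g` and multiplier `l` as a function of the pair
`p = (constraint value, objective value)`; the primal variable `x` has been eliminated. -/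
def augLagrangian (g : ℝ) (l : Y) (p : Y × ℝ) : ℝ :=
  p.2 - ⟪l, p.1⟫ + g / 2 * ‖p.1‖ ^ 2

/-- `q` minimizes the augmented Lagrangian over `G`, i.e. it is the exact solution of the
subproblem with penalty `g` and multiplier `l`. -/
def IsProxPoint (G : Set (Y × ℝ)) (g : ℝ) (l : Y) (q : Y × ℝ) : Prop :=
  q ∈ G ∧ IsMinOn (augLagrangian g l) G q

variable {G : Set (Y × ℝ)} {g : ℝ} {l : Y}

lemma continuous_augLagrangian : Continuous (augLagrangian g l) := by
  unfold augLagrangian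
  fun_prop

lemma augLagrangian_sub (p q : Y × ℝ) :
    augLagrangian g l p - augLagrangian g l q
      = p.2 - q.2 - ⟪l - g • q.1, p.1 - q.1⟫ + g / 2 * ‖p.1 - q.1‖ ^ 2 := by
  simp only [augLagrangian, inner_sub_left, inner_sub_right, real_inner_smul_left,
    real_inner_self_eq_norm_sq, norm_sub_sq_real]
  rw [real_inner_comm q.1 p.1]
  ring

lemma augLagrangian_segment (p q : Y × ℝ) (t : ℝ) :
    augLagrangian g l ((1 - t) • q + t • p)
      = (1 - t) * augLagrangian g l q + t * augLagrangian g l p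
        - g / 2 * ((1 - t) * t) * ‖p.1 - q.1‖ ^ 2 := by
  simp only [augLagrangian, Prod.fst_add, Prod.snd_add, Prod.smul_fst, Prod.smul_snd,
    inner_add_right, real_inner_smul_left, real_inner_smul_right, smul_eq_mul, norm_add_sq_real,
    norm_sub_sq_real, norm_smul, mul_pow, Real.norm_eq_abs, sq_abs]
  rw [real_inner_comm p.1 q.1]
  ring

lemma IsProxPoint.quadratic_growth (hG : Convex ℝ G) {p q : Y × ℝ} (hq : IsProxPoint G g l q)
    (hp : p ∈ G) :
    augLagrangian g l q + g / 2 * ‖p.1 - q.1‖ ^ 2 ≤ augLagrangian g l p := by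
  set d := g / 2 * ‖p.1 - q.1‖ ^ 2
  have growth_along_segment : ∀ t ∈ Set.Ioo (0 : ℝ) 1,
      augLagrangian g l q + (1 - t) * d ≤ augLagrangian g l p := by
    rintro t ⟨ht0, ht1⟩
    have hmin := isMinOn_iff.1 hq.2 _ (hG hq.1 hp (sub_nonneg.2 ht1.le) ht0.le (sub_add_cancel 1 t))
    rw [augLagrangian_segment] at hmin
    refine le_of_mul_le_mul_left ?_ ht0
    linear_combination hmin
  have hlim : Tendsto (fun t : ℝ => augLagrangian g l q + (1 - t) * d) (nhdsWithin 0 (Set.Ioi 0))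
      (nhds (augLagrangian g l q + (1 - 0) * d)) :=
    tendsto_nhdsWithin_of_tendsto_nhds (Continuous.tendsto (by fun_prop) 0)
  rw [sub_zero, one_mul] at hlim
  exact le_of_tendsto hlim
    (mem_of_superset (Ioo_mem_nhdsGT zero_lt_one) growth_along_segment)

lemma IsProxPoint.add_inner_le (hG : Convex ℝ G) {p q : Y × ℝ} (hq : IsProxPoint G g l q)
    (hp : p ∈ G) : q.2 + ⟪l - g • q.1, p.1 - q.1⟫ ≤ p.2 := by
  linarith [hq.quadratic_growth hG hp, augLagrangian_sub (g := g) (l := l) p q]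

lemma bddBelow_augLagrangian_image (hg : 0 < g) {c : ℝ} {b : Y}
    (hminorant : ∀ p ∈ G, c + ⟪b, p.1⟫ ≤ p.2) : BddBelow (augLagrangian g l '' G) := by
  refine ⟨c - ‖b - l‖ ^ 2 / (2 * g), ?_⟩
  rintro _ ⟨p, hp, rfl⟩
  have cauchy_schwarz : -(‖b - l‖ * ‖p.1‖) ≤ ⟪b, p.1⟫ - ⟪l, p.1⟫ := by
    rw [← inner_sub_left]
    exact neg_le_of_abs_le (abs_real_inner_le_norm _ _)
  have young : ‖b - l‖ * ‖p.1‖ ≤ ‖b - l‖ ^ 2 / (2 * g) + g / 2 * ‖p.1‖ ^ 2 := by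
    have hsq : 0 ≤ (‖b - l‖ - g * ‖p.1‖) ^ 2 / (2 * g) := by positivity
    have hexpand : (‖b - l‖ - g * ‖p.1‖) ^ 2 / (2 * g)
        = ‖b - l‖ ^ 2 / (2 * g) + g / 2 * ‖p.1‖ ^ 2 - ‖b - l‖ * ‖p.1‖ := by field_simp; ring
    linarith
  simp only [augLagrangian]
  linarith [hminorant p hp]

lemma cauchySeq_fst_of_tendsto_augLagrangian (hg : 0 < g) (hG : Convex ℝ G) {m : ℝ}
    (hm : ∀ p ∈ G, m ≤ augLagrangian g l p) {p : ℕ → Y × ℝ} (hpG : ∀ n, p n ∈ G)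
    (hp : Tendsto (fun n => augLagrangian g l (p n)) atTop (nhds m)) :
    CauchySeq fun n => (p n).1 := by
  rw [cauchySeq_iff_tendsto_dist_atTop_0, ← prod_atTop_atTop_eq]
  set gap : ℕ × ℕ → ℝ := fun n =>
    8 / g * ((augLagrangian g l (p n.1) + augLagrangian g l (p n.2)) / 2 - m)
  have hgap : Tendsto (fun n => √(gap n)) (atTop ×ˢ atTop) (nhds 0) := by
    have hlim := ((((hp.comp tendsto_fst).add (hp.comp tendsto_snd)).div_const 2).sub_const
      m).const_mul (8 / g)
    simpa using hlim.sqrt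
  refine squeeze_zero (fun _ => dist_nonneg) (fun n => ?_) hgap
  have hmid := hm _ (hG (hpG n.2) (hpG n.1) (by norm_num : (0 : ℝ) ≤ 1 - 1 / 2)
    (by norm_num : (0 : ℝ) ≤ 1 / 2) (by norm_num))
  rw [augLagrangian_segment] at hmid
  rw [dist_eq_norm]
  apply Real.le_sqrt_of_sq_le
  rw [← sub_nonneg] at hmid ⊢
  calc (0 : ℝ) ≤ 8 / g * _ := mul_nonneg (by positivity) hmid
    _ = _ := by simp only [gap]; field_simp; ring

lemma exists_isProxPoint [CompleteSpace Y] (hg : 0 < g) (hne : G.Nonempty) (hclosed : IsClosed G)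
    (hG : Convex ℝ G) {c : ℝ} {b : Y} (hminorant : ∀ p ∈ G, c + ⟪b, p.1⟫ ≤ p.2) :
    ∃ q, IsProxPoint G g l q := by
  have hbdd := bddBelow_augLagrangian_image (l := l) hg hminorant
  set m := sInf (augLagrangian g l '' G)
  have hm : ∀ p ∈ G, m ≤ augLagrangian g l p := fun p hp => csInf_le hbdd ⟨p, hp, rfl⟩
  obtain ⟨_, -, hlim, hmem⟩ := exists_seq_tendsto_sInf (hne.image _) hbdd
  choose p hpG hp using hmem
  simp only [← funext hp] at hlim
  obtain ⟨s, hs⟩ := cauchySeq_tendsto_of_complete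
    (cauchySeq_fst_of_tendsto_augLagrangian hg hG hm hpG hlim)
  have hsnd : Tendsto (fun n => (p n).2) atTop (nhds (m + ⟪l, s⟫ - g / 2 * ‖s‖ ^ 2)) := by
    refine ((hlim.add (tendsto_const_nhds.inner hs)).sub ((hs.norm.pow 2).const_mul _)).congr
      fun n => ?_
    simp only [augLagrangian]
    ring
  refine ⟨(s, m + ⟪l, s⟫ - g / 2 * ‖s‖ ^ 2),
    hclosed.mem_of_tendsto (hs.prodMk_nhds hsnd) (Eventually.of_forall hpG), ?_⟩
  refine isMinOn_iff.2 fun p' hp' => le_of_eq_of_le ?_ (hm p' hp')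
  simp only [augLagrangian]
  ring

end AugmentedLagrangian

section InexactALM

variable {Y : Type*} [NormedAddCommGroup Y] [InnerProductSpace ℝ Y]

/-- The sum of the first `k` penalty parameters, on whose scale all rates are measured. -/
abbrev penaltySum (γ : ℕ → ℝ) (k : ℕ) : ℝ := ∑ i ∈ Finset.range k, γ i

/-- The inexact augmented Lagrangian method over a set `G` of pairs
(constraint value, objective value), with penalties `γ` and errors `ε`. The iterates are
`(s (k + 1), r (k + 1))`; the entries of `s`, `r` and `ε` at index `0` are unconstrained. -/
structure IsIALM (G : Set (Y × ℝ)) (γ ε : ℕ → ℝ) (s : ℕ → Y) (r : ℕ → ℝ) (lam : ℕ → Y) :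
    Prop where
  penalty_pos : ∀ k, 0 < γ k
  error_nonneg : ∀ k, 0 ≤ ε (k + 1)
  mem : ∀ k, (s (k + 1), r (k + 1)) ∈ G
  le_add_error : ∀ k, ∀ p ∈ G, augLagrangian (γ k) (lam k) (s (k + 1), r (k + 1)) ≤
    augLagrangian (γ k) (lam k) p + ε (k + 1) ^ 2 / (2 * γ k)
  multiplier_succ : ∀ k, lam (k + 1) = lam k - γ k • s (k + 1)

/-- A solution of the closest feasible problem over `G`: the pair `(sbar, v)` belongs to `G`,
`lbar` is a subgradient there of the function whose epigraph is `G`, and `sbar` satisfies the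
variational inequality characterizing the constraint value of minimal norm. -/
structure IsClosestSolution (G : Set (Y × ℝ)) (sbar lbar : Y) (v : ℝ) : Prop where
  mem : (sbar, v) ∈ G
  add_inner_le : ∀ p ∈ G, v + ⟪lbar, p.1 - sbar⟫ ≤ p.2
  inner_nonneg : ∀ p ∈ G, 0 ≤ ⟪sbar, p.1 - sbar⟫

/-- The multiplier produced by an exact step to `z k` from the multiplier `lam k`. -/
def proxMultiplier (γ : ℕ → ℝ) (lam : ℕ → Y) (z : ℕ → Y × ℝ) (k : ℕ) : Y :=
  lam k - γ k • (z k).1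

/-- The offset from `lbar` of the multiplier after removal of the drift `-penaltySum γ k • sbar`
that the multipliers of an infeasible problem undergo. -/
def recenteredMultiplier (γ : ℕ → ℝ) (lam : ℕ → Y) (sbar lbar : Y) (k : ℕ) : Y :=
  lam k - lbar + penaltySum γ k • sbar

/-- The negative dual function at `proxMultiplier γ lam z k`, where the supremum is attained at
`z k`, corrected for the drift of the multipliers. -/
def dualEnergy (γ : ℕ → ℝ) (lam : ℕ → Y) (z : ℕ → Y × ℝ) (sbar : Y) (k : ℕ) : ℝ :=
  ⟪proxMultiplier γ lam z k, (z k).1⟫ - (z k).2 + penaltySum γ (k + 1) * ‖sbar‖ ^ 2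

variable {G : Set (Y × ℝ)} {γ ε r : ℕ → ℝ} {s lam : ℕ → Y} {z : ℕ → Y × ℝ} {sbar lbar : Y} {v : ℝ}

lemma penaltySum_nonneg (hγ : ∀ k, 0 < γ k) (k : ℕ) : 0 ≤ penaltySum γ k :=
  Finset.sum_nonneg fun i _ => (hγ i).le

lemma penaltySum_succ_pos (hγ : ∀ k, 0 < γ k) (k : ℕ) : 0 < penaltySum γ (k + 1) :=
  Finset.sum_pos (fun i _ => hγ i) Finset.nonempty_range_add_one

lemma summable_of_summable_mul_penaltySum (hγ : ∀ k, 0 < γ k) {c : ℕ → ℝ} (hc : ∀ k, 0 ≤ c k)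
    (h : Summable fun k => c k * penaltySum γ (k + 1)) : Summable c := by
  refine Summable.of_nonneg_of_le hc (fun k => ?_) (h.mul_right (1 / γ 0))
  have first_le : γ 0 ≤ penaltySum γ (k + 1) :=
    Finset.single_le_sum (fun i _ => (hγ i).le) (Finset.mem_range.2 k.succ_pos)
  rw [mul_one_div, le_div_iff₀ (hγ 0)]
  exact mul_le_mul_of_nonneg_left first_le (hc k)

lemma IsClosestSolution.norm_sub_sq_le (hbar : IsClosestSolution G sbar lbar v) {p : Y × ℝ}
    (hp : p ∈ G) : ‖p.1 - sbar‖ ^ 2 ≤ ‖p.1‖ ^ 2 - ‖sbar‖ ^ 2 :=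
  norm_sub_sq_le_sub_of_inner_nonneg (hbar.inner_nonneg p hp)

lemma IsClosestSolution.exists_isProxPoint [CompleteSpace Y]
    (hbar : IsClosestSolution G sbar lbar v) (hclosed : IsClosed G) (hG : Convex ℝ G) {g : ℝ}
    (hg : 0 < g) (l : Y) : ∃ q, IsProxPoint G g l q := by
  refine _root_.exists_isProxPoint hg ⟨_, hbar.mem⟩ hclosed hG (c := v - ⟪lbar, sbar⟫) (b := lbar)
    fun p hp => ?_
  have := hbar.add_inner_le p hp
  rw [inner_sub_right] at this
  linarith

lemma recenteredMultiplier_sub_smul (k : ℕ) :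
    recenteredMultiplier γ lam sbar lbar k - γ k • ((z k).1 - sbar)
      = proxMultiplier γ lam z k - lbar + penaltySum γ (k + 1) • sbar := by
  simp only [recenteredMultiplier, proxMultiplier, penaltySum, Finset.sum_range_succ, smul_sub,
    add_smul]
  abel

namespace IsIALM

lemma norm_sub_prox_le (h : IsIALM G γ ε s r lam) (hG : Convex ℝ G)
    (hz : ∀ k, IsProxPoint G (γ k) (lam k) (z k)) (k : ℕ) :
    ‖s (k + 1) - (z k).1‖ ≤ ε (k + 1) / γ k := by
  have hγ := h.penalty_pos k
  have hgrowth : γ k / 2 * ‖s (k + 1) - (z k).1‖ ^ 2 ≤ ε (k + 1) ^ 2 / (2 * γ k) := by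
    linarith [(hz k).quadratic_growth hG (h.mem k), h.le_add_error k _ (hz k).1]
  refine le_of_sq_le_sq ?_ (div_nonneg (h.error_nonneg k) hγ.le)
  calc ‖s (k + 1) - (z k).1‖ ^ 2 = 2 / γ k * (γ k / 2 * ‖s (k + 1) - (z k).1‖ ^ 2) := by
        field_simp
    _ ≤ 2 / γ k * (ε (k + 1) ^ 2 / (2 * γ k)) := by gcongr
    _ = (ε (k + 1) / γ k) ^ 2 := by field_simp

lemma norm_multiplier_sub_proxMultiplier_le (h : IsIALM G γ ε s r lam) (hG : Convex ℝ G)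
    (hz : ∀ k, IsProxPoint G (γ k) (lam k) (z k)) (k : ℕ) :
    ‖lam (k + 1) - proxMultiplier γ lam z k‖ ≤ ε (k + 1) := by
  have hγ := h.penalty_pos k
  have hdiff : lam (k + 1) - proxMultiplier γ lam z k = -(γ k • (s (k + 1) - (z k).1)) := by
    rw [h.multiplier_succ, proxMultiplier, smul_sub]
    abel
  rw [hdiff, norm_neg, norm_smul, Real.norm_of_nonneg hγ.le, ← le_div_iff₀' hγ]
  exact h.norm_sub_prox_le hG hz k

lemma inner_multiplier_sub_proxMultiplier_le (h : IsIALM G γ ε s r lam) (hG : Convex ℝ G)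
    (hz : ∀ k, IsProxPoint G (γ k) (lam k) (z k)) (k : ℕ) (y : Y) :
    ⟪lam (k + 1) - proxMultiplier γ lam z k, y⟫ ≤ ε (k + 1) * ‖y‖ :=
  (real_inner_le_norm _ _).trans <|
    mul_le_mul_of_nonneg_right (h.norm_multiplier_sub_proxMultiplier_le hG hz k) (norm_nonneg y)

lemma norm_recenteredMultiplier_sub_smul_le (h : IsIALM G γ ε s r lam) (hG : Convex ℝ G)
    (hz : ∀ k, IsProxPoint G (γ k) (lam k) (z k)) (hbar : IsClosestSolution G sbar lbar v) (k : ℕ) :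
    ‖recenteredMultiplier γ lam sbar lbar k - γ k • ((z k).1 - sbar)‖
      ≤ ‖recenteredMultiplier γ lam sbar lbar k‖ := by
  apply norm_sub_smul_le_of_inner_nonneg (h.penalty_pos k).le
  have hprox := (hz k).add_inner_le hG hbar.mem
  have hsub := hbar.add_inner_le _ (hz k).1
  have hdrift := mul_nonneg (penaltySum_nonneg h.penalty_pos (k + 1))
    (hbar.inner_nonneg _ (hz k).1)
  rw [← neg_sub (z k).1, inner_neg_right] at hprox
  rw [recenteredMultiplier_sub_smul, inner_add_left, inner_sub_left, real_inner_smul_left,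
    proxMultiplier]
  linarith

lemma norm_recenteredMultiplier_succ_le (h : IsIALM G γ ε s r lam) (hG : Convex ℝ G)
    (hz : ∀ k, IsProxPoint G (γ k) (lam k) (z k)) (hbar : IsClosestSolution G sbar lbar v) (k : ℕ) :
    ‖recenteredMultiplier γ lam sbar lbar (k + 1)‖
      ≤ ‖recenteredMultiplier γ lam sbar lbar k‖ + ε (k + 1) := by
  have hsplit : recenteredMultiplier γ lam sbar lbar (k + 1)
      = (recenteredMultiplier γ lam sbar lbar k - γ k • ((z k).1 - sbar))
        + (lam (k + 1) - proxMultiplier γ lam z k) := by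
    rw [recenteredMultiplier_sub_smul, recenteredMultiplier]
    abel
  rw [hsplit]
  exact (norm_add_le _ _).trans (add_le_add (h.norm_recenteredMultiplier_sub_smul_le hG hz hbar k)
    (h.norm_multiplier_sub_proxMultiplier_le hG hz k))

lemma exists_norm_recenteredMultiplier_le (h : IsIALM G γ ε s r lam) (hG : Convex ℝ G)
    (hz : ∀ k, IsProxPoint G (γ k) (lam k) (z k)) (hbar : IsClosestSolution G sbar lbar v)
    (hε : Summable ε) : ∃ D, ∀ k, ‖recenteredMultiplier γ lam sbar lbar k‖ ≤ D := by
  obtain ⟨D, hD⟩ := bddAbove_range_of_succ_le_add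
    (u := fun k => ‖recenteredMultiplier γ lam sbar lbar k‖) h.error_nonneg
    ((summable_nat_add_iff 1).2 hε) (h.norm_recenteredMultiplier_succ_le hG hz hbar)
  exact ⟨D, Set.forall_mem_range.1 hD⟩

lemma norm_prox_succ_sq_le (h : IsIALM G γ ε s r lam) (hG : Convex ℝ G)
    (hz : ∀ k, IsProxPoint G (γ k) (lam k) (z k)) (k : ℕ) :
    ‖(z (k + 1)).1‖ ^ 2 ≤ ‖(z k).1‖ ^ 2 + (ε (k + 1) / γ (k + 1)) ^ 2 := by
  have hγ := h.penalty_pos (k + 1)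
  set d := (z (k + 1)).1 - (z k).1 with hd
  have hforward := (hz k).add_inner_le hG (hz (k + 1)).1
  have hbackward := (hz (k + 1)).add_inner_le hG (hz k).1
  have herror := h.inner_multiplier_sub_proxMultiplier_le hG hz k d
  rw [← neg_sub (z (k + 1)).1, inner_neg_right, ← hd, inner_sub_left, real_inner_smul_left]
    at hbackward
  rw [inner_sub_left, proxMultiplier] at herror
  have hinner : ⟪(z (k + 1)).1, d⟫ ≤ ε (k + 1) / γ (k + 1) * ‖d‖ := by
    rw [div_mul_eq_mul_div, le_div_iff₀' hγ]
    linarith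
  have hpolar : ‖(z k).1‖ ^ 2 = ‖(z (k + 1)).1‖ ^ 2 - 2 * ⟪(z (k + 1)).1, d⟫ + ‖d‖ ^ 2 := by
    rw [← norm_sub_sq_real, hd, sub_sub_cancel]
  nlinarith [sq_nonneg (ε (k + 1) / γ (k + 1) - ‖d‖)]

lemma exists_norm_prox_le (h : IsIALM G γ ε s r lam) (hG : Convex ℝ G)
    (hz : ∀ k, IsProxPoint G (γ k) (lam k) (z k))
    (hε : Summable fun k => (ε (k + 1) / γ (k + 1)) ^ 2) : ∃ R, ∀ k, ‖(z k).1‖ ≤ R := by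
  obtain ⟨B, hB⟩ := bddAbove_range_of_succ_le_add (u := fun k => ‖(z k).1‖ ^ 2)
    (fun _ => sq_nonneg _) hε (h.norm_prox_succ_sq_le hG hz)
  exact ⟨√B, fun k => Real.le_sqrt_of_sq_le (hB ⟨k, rfl⟩)⟩

lemma penalty_mul_gap_le_dualEnergy_sub (h : IsIALM G γ ε s r lam) (hG : Convex ℝ G)
    (hz : ∀ k, IsProxPoint G (γ k) (lam k) (z k)) (sbar : Y) (k : ℕ) :
    γ (k + 1) * (‖(z (k + 1)).1‖ ^ 2 - ‖sbar‖ ^ 2)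
      ≤ dualEnergy γ lam z sbar k - dualEnergy γ lam z sbar (k + 1)
        + ε (k + 1) * ‖(z (k + 1)).1‖ := by
  have hprox := (hz k).add_inner_le hG (hz (k + 1)).1
  have herror := h.inner_multiplier_sub_proxMultiplier_le hG hz k (z (k + 1)).1
  simp only [dualEnergy, proxMultiplier, penaltySum, Finset.sum_range_succ _ (k + 1),
    inner_sub_left, inner_sub_right, real_inner_smul_left, real_inner_self_eq_norm_sq]
    at hprox herror ⊢
  linarith

lemma exists_le_dualEnergy (h : IsIALM G γ ε s r lam) (hG : Convex ℝ G)
    (hz : ∀ k, IsProxPoint G (γ k) (lam k) (z k)) (hbar : IsClosestSolution G sbar lbar v)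
    (hε : Summable ε) : ∃ B, ∀ k, B ≤ dualEnergy γ lam z sbar k := by
  obtain ⟨D, hD⟩ := h.exists_norm_recenteredMultiplier_le hG hz hbar hε
  refine ⟨⟪lbar, sbar⟫ - D * ‖sbar‖ - v, fun k => ?_⟩
  have hprox := (hz k).add_inner_le hG hbar.mem
  set w' := recenteredMultiplier γ lam sbar lbar k - γ k • ((z k).1 - sbar) with hw'
  have hmultiplier : proxMultiplier γ lam z k = w' + lbar - penaltySum γ (k + 1) • sbar := by
    rw [hw', recenteredMultiplier_sub_smul]
    abel
  have hinner : ⟪proxMultiplier γ lam z k, sbar⟫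
      = ⟪w', sbar⟫ + ⟪lbar, sbar⟫ - penaltySum γ (k + 1) * ‖sbar‖ ^ 2 := by
    rw [hmultiplier, inner_sub_left, inner_add_left, real_inner_smul_left,
      real_inner_self_eq_norm_sq]
  have hw'_le : -(D * ‖sbar‖) ≤ ⟪w', sbar⟫ := by
    have hnorm : ‖w'‖ ≤ D := (h.norm_recenteredMultiplier_sub_smul_le hG hz hbar k).trans (hD k)
    refine neg_le_of_abs_le ((abs_real_inner_le_norm _ _).trans ?_)
    exact mul_le_mul_of_nonneg_right hnorm (norm_nonneg sbar)
  rw [inner_sub_right, ← proxMultiplier] at hprox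
  rw [dualEnergy]
  linarith

lemma exists_penaltySum_mul_gap_le (h : IsIALM G γ ε s r lam) (hG : Convex ℝ G)
    (hz : ∀ k, IsProxPoint G (γ k) (lam k) (z k)) (hbar : IsClosestSolution G sbar lbar v)
    (hε : Summable ε)
    (hεγ : Summable fun k => (ε (k + 1) / γ (k + 1)) ^ 2 * penaltySum γ (k + 1)) :
    ∃ B, ∀ k, penaltySum γ (k + 1) * (‖(z k).1‖ ^ 2 - ‖sbar‖ ^ 2) ≤ B := by
  have hγ := h.penalty_pos
  obtain ⟨R, hR⟩ := h.exists_norm_prox_le hG hz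
    (summable_of_summable_mul_penaltySum hγ (fun _ => sq_nonneg _) hεγ)
  have hR0 : 0 ≤ R := (norm_nonneg _).trans (hR 0)
  obtain ⟨b, hb⟩ := h.exists_le_dualEnergy hG hz hbar hε
  set lyapunov : ℕ → ℝ := fun k =>
    penaltySum γ (k + 1) * (‖(z k).1‖ ^ 2 - ‖sbar‖ ^ 2) + dualEnergy γ lam z sbar k with hlyap
  have lyapunov_succ_le : ∀ k, lyapunov (k + 1)
      ≤ lyapunov k + ((ε (k + 1) / γ (k + 1)) ^ 2 * penaltySum γ (k + 1) + ε (k + 1) * R) := by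
    intro k
    have hgap := mul_le_mul_of_nonneg_left (h.norm_prox_succ_sq_le hG hz k)
      (penaltySum_nonneg hγ (k + 1))
    have henergy := h.penalty_mul_gap_le_dualEnergy_sub hG hz sbar k
    have hbound := mul_le_mul_of_nonneg_left (hR (k + 1)) (h.error_nonneg k)
    have hsucc : penaltySum γ (k + 1 + 1) = penaltySum γ (k + 1) + γ (k + 1) :=
      Finset.sum_range_succ _ _
    simp only [hlyap, hsucc]
    linarith
  obtain ⟨B, hB⟩ := bddAbove_range_of_succ_le_add
    (fun k => add_nonneg (mul_nonneg (sq_nonneg _) (penaltySum_nonneg hγ _))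
      (mul_nonneg (h.error_nonneg k) hR0))
    (hεγ.add (((summable_nat_add_iff 1).2 hε).mul_right R)) lyapunov_succ_le
  refine ⟨B - b, fun k => ?_⟩
  have hBk : lyapunov k ≤ B := hB ⟨k, rfl⟩
  linarith [hb k]

lemma isBigO_norm_sq_sub (h : IsIALM G γ ε s r lam) (hG : Convex ℝ G)
    (hz : ∀ k, IsProxPoint G (γ k) (lam k) (z k)) (hbar : IsClosestSolution G sbar lbar v)
    (hS : Tendsto (penaltySum γ) atTop atTop) (hε : Summable ε)
    (herr : (fun k => ε (k + 1) / γ k * penaltySum γ (k + 1))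
      =O[atTop] fun k => 1 / √(penaltySum γ (k + 1)))
    (hεγ : Summable fun k => (ε (k + 1) / γ (k + 1)) ^ 2 * penaltySum γ (k + 1)) :
    (fun k => ‖s (k + 1)‖ ^ 2 - ‖sbar‖ ^ 2) =O[atTop] fun k => 1 / penaltySum γ (k + 1) := by
  have hS' := (tendsto_add_atTop_iff_nat 1).2 hS
  obtain ⟨B, hB⟩ := h.exists_penaltySum_mul_gap_le hG hz hbar hε hεγ
  have hgap : (fun k => ‖(z k).1‖ ^ 2 - ‖sbar‖ ^ 2) =O[atTop] fun k => 1 / penaltySum γ (k + 1) :=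
    isBigO_one_div_of_mul_le (penaltySum_succ_pos h.penalty_pos)
      (fun k => (sq_nonneg _).trans (hbar.norm_sub_sq_le (hz k).1)) hB
  have hdiff : (fun k => s (k + 1) - (z k).1) =O[atTop] fun k => 1 / penaltySum γ (k + 1) :=
    (IsBigO.of_norm_le (h.norm_sub_prox_le hG hz)).trans
      (isBigO_one_div_of_mul_isBigO_one_div_sqrt hS' herr)
  obtain ⟨R, hR⟩ := h.exists_norm_prox_le hG hz
    (summable_of_summable_mul_penaltySum h.penalty_pos (fun _ => sq_nonneg _) hεγ)
  have hz_bounded : (fun k => (z k).1) =O[atTop] fun _ => (1 : ℝ) :=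
    (isBigO_of_le' (c := R) atTop fun k => by simpa using hR k)
  have hdiff_bounded : (fun k => s (k + 1) - (z k).1) =O[atTop] fun _ => (1 : ℝ) :=
    hdiff.trans ((hS'.const_div_atTop 1).isBigO_one ℝ)
  have hcorrection : (fun k => ⟪s (k + 1) - (z k).1, (s (k + 1) - (z k).1) + (2 : ℝ) • (z k).1⟫)
      =O[atTop] fun k => 1 / penaltySum γ (k + 1) := by
    have hsum := hdiff_bounded.add (hz_bounded.const_smul_left (2 : ℝ))
    have hnorm := hdiff.norm_left.mul hsum.norm_left
    simp only [mul_one] at hnorm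
    exact (isBigO_of_le _ fun k => (norm_inner_le_norm _ _).trans (le_abs_self _)).trans hnorm
  refine (hgap.add hcorrection).congr_left fun k => ?_
  simp only [inner_add_right, inner_sub_left, inner_sub_right, inner_smul_right,
    real_inner_self_eq_norm_sq]
  rw [real_inner_comm (s (k + 1))]
  ring

lemma isBigO_sub_of_norm_le [CompleteSpace Y] (h : IsIALM G γ ε s r lam) (hG : Convex ℝ G)
    (hclosed : IsClosed G) (hbar : IsClosestSolution G sbar lbar v)
    (hS : Tendsto (penaltySum γ) atTop atTop) (hε : Summable ε)
    (herr : (fun k => ε (k + 1) / γ k * penaltySum γ (k + 1))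
      =O[atTop] fun k => 1 / √(penaltySum γ (k + 1)))
    (hεγ : Summable fun k => (ε (k + 1) / γ (k + 1)) ^ 2 * penaltySum γ (k + 1))
    {b : ℕ → Y} {t : ℕ → ℝ} (hb : ∀ k, (b (k + 1), t (k + 1)) ∈ G)
    (hle : ∀ k, ‖b (k + 1)‖ ≤ ‖s (k + 1)‖) :
    (fun k => ‖b k - sbar‖) =O[atTop] fun k => 1 / √(penaltySum γ k) := by
  choose z hz using fun k => hbar.exists_isProxPoint hclosed hG (h.penalty_pos k) (lam k)
  refine isBigO_atTop_of_isBigO_succ (isBigO_one_div_sqrt_of_sq_le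
    (fun k => penaltySum_nonneg h.penalty_pos (k + 1)) (fun k => norm_nonneg _) (fun k => ?_)
    (h.isBigO_norm_sq_sub hG hz hbar hS hε herr hεγ))
  exact (hbar.norm_sub_sq_le (hb k)).trans
    (sub_le_sub_right (pow_le_pow_left₀ (norm_nonneg _) (hle k) 2) _)

lemma abs_value_sub_le (h : IsIALM G γ ε s r lam) (hbar : IsClosestSolution G sbar lbar v) (k : ℕ) :
    |r (k + 1) - v| ≤ (‖recenteredMultiplier γ lam sbar lbar k‖ + ‖lbar‖) * ‖s (k + 1) - sbar‖
      + ε (k + 1) / 2 * (ε (k + 1) / γ k) := by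
  have hγ := h.penalty_pos k
  set w := recenteredMultiplier γ lam sbar lbar k with hw
  have herror : 0 ≤ ε (k + 1) / 2 * (ε (k + 1) / γ k) := by
    have := h.error_nonneg k
    positivity
  have hw_nonneg : 0 ≤ ‖w‖ * ‖s (k + 1) - sbar‖ := by positivity
  have hinner := hbar.inner_nonneg _ (h.mem k)
  rw [abs_le]
  constructor
  · have hsub := hbar.add_inner_le _ (h.mem k)
    have hlbar := neg_le_of_abs_le (abs_real_inner_le_norm lbar (s (k + 1) - sbar))
    dsimp only at hsub
    linarith
  · have hmultiplier : lam k = w + lbar - penaltySum γ k • sbar := by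
      rw [hw, recenteredMultiplier]
      abel
    have hlam : ⟪lam k, s (k + 1) - sbar⟫ ≤ (‖w‖ + ‖lbar‖) * ‖s (k + 1) - sbar‖ := by
      have hdrift := mul_nonneg (penaltySum_nonneg h.penalty_pos k) hinner
      have hcs : ⟪w + lbar, s (k + 1) - sbar⟫ ≤ (‖w‖ + ‖lbar‖) * ‖s (k + 1) - sbar‖ :=
        (real_inner_le_norm _ _).trans
          (mul_le_mul_of_nonneg_right (norm_add_le _ _) (norm_nonneg _))
      rw [hmultiplier, inner_sub_left, real_inner_smul_left]
      linarith
    have hpenalty : 0 ≤ γ k / 2 * (‖s (k + 1)‖ ^ 2 - ‖sbar‖ ^ 2) :=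
      mul_nonneg (half_pos hγ).le ((sq_nonneg _).trans (hbar.norm_sub_sq_le (h.mem k)))
    have hopt := h.le_add_error k _ hbar.mem
    have herror_eq : ε (k + 1) ^ 2 / (2 * γ k) = ε (k + 1) / 2 * (ε (k + 1) / γ k) := by ring
    rw [inner_sub_right] at hlam
    simp only [augLagrangian, herror_eq] at hopt
    linarith

lemma isBigO_value_sub [CompleteSpace Y] (h : IsIALM G γ ε s r lam) (hG : Convex ℝ G)
    (hclosed : IsClosed G) (hbar : IsClosestSolution G sbar lbar v)
    (hS : Tendsto (penaltySum γ) atTop atTop) (hε : Summable ε)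
    (herr : (fun k => ε (k + 1) / γ k * penaltySum γ (k + 1))
      =O[atTop] fun k => 1 / √(penaltySum γ (k + 1)))
    (hεγ : Summable fun k => (ε (k + 1) / γ (k + 1)) ^ 2 * penaltySum γ (k + 1)) :
    (fun k => r k - v) =O[atTop] fun k => 1 / √(penaltySum γ k) := by
  choose z hz using fun k => hbar.exists_isProxPoint hclosed hG (h.penalty_pos k) (lam k)
  have hS' := (tendsto_add_atTop_iff_nat 1).2 hS
  obtain ⟨D, hD⟩ := h.exists_norm_recenteredMultiplier_le hG hz hbar hε
  have hmultiplier : (fun k => ‖recenteredMultiplier γ lam sbar lbar k‖ + ‖lbar‖)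
      =O[atTop] fun _ => (1 : ℝ) := by
    refine isBigO_of_le' (c := D + ‖lbar‖) atTop fun k => ?_
    rw [Real.norm_of_nonneg (by positivity), norm_one, mul_one]
    exact add_le_add_left (hD k) _
  have hs : (fun k => ‖s (k + 1) - sbar‖) =O[atTop] fun k => 1 / √(penaltySum γ (k + 1)) :=
    (h.isBigO_sub_of_norm_le hG hclosed hbar hS hε herr hεγ h.mem fun _ => le_rfl).comp_tendsto
      (tendsto_add_atTop_nat 1)
  have hε_bounded : (fun k => ε (k + 1) / 2) =O[atTop] fun _ => (1 : ℝ) :=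
    ((((summable_nat_add_iff 1).2 hε).tendsto_atTop_zero).div_const 2).isBigO_one ℝ
  have hεγ_rate : (fun k => ε (k + 1) / γ k) =O[atTop] fun k => 1 / √(penaltySum γ (k + 1)) :=
    (isBigO_one_div_of_mul_isBigO_one_div_sqrt hS' herr).trans (isBigO_one_div_one_div_sqrt hS')
  have hbound := (hmultiplier.mul hs).add (hε_bounded.mul hεγ_rate)
  simp only [one_mul] at hbound
  exact isBigO_atTop_of_isBigO_succ ((IsBigO.of_norm_le (h.abs_value_sub_le hbar)).trans hbound)

end IsIALM

end InexactALM

section ExtendedRealBounds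

variable {ι : Type*} {l : Filter ι} {F : ι → EReal} {v : ℝ} {T : ι → ℝ}

lemma tendsto_ereal_of_tendsto_toReal (hF : ∀ᶠ i in l, F i = ((F i).toReal : EReal))
    (hv : Tendsto (fun i => (F i).toReal) l (nhds v)) : Tendsto F l (nhds (v : EReal)) :=
  ((continuous_coe_real_ereal.tendsto v).comp hv).congr' (hF.mono fun _ hi => hi.symm)

lemma exists_ereal_le_add_div_sqrt (hF : ∀ᶠ i in l, F i = ((F i).toReal : EReal))
    (hv : (fun i => (F i).toReal - v) =O[l] fun i => 1 / √(T i)) :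
    ∃ M : ℝ, ∀ᶠ i in l, F i ≤ (v : EReal) + ((M / √(T i) : ℝ) : EReal) ∧
      (v : EReal) ≤ F i + ((M / √(T i) : ℝ) : EReal) := by
  obtain ⟨M, hM⟩ := hv.bound
  refine ⟨M, ?_⟩
  filter_upwards [hF, hM] with i hFi hMi
  rw [Real.norm_eq_abs, Real.norm_of_nonneg (by positivity), mul_one_div, abs_le] at hMi
  rw [hFi, ← EReal.coe_add, ← EReal.coe_add, EReal.coe_le_coe_iff, EReal.coe_le_coe_iff]
  constructor <;> linarith

end ExtendedRealBounds

section AttainablePairs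

variable {E Y : Type*} {f : E → EReal} {CC : Set (E × Y)}

/-- The pairs (constraint value, upper bound on the objective value) attained by the feasible
points: the strict epigraph of `valueFn f CC` is contained in this set, and this set in the
epigraph. -/
def attainablePairs (f : E → EReal) (CC : Set (E × Y)) : Set (Y × ℝ) :=
  {p | ∃ x, (x, p.1) ∈ CC ∧ f x ≤ (p.2 : EReal)}

lemma valueFn_le {x : E} {s : Y} (h : (x, s) ∈ CC) : valueFn f CC s ≤ f x :=
  iInf₂_le x h

lemma convex_attainablePairs [AddCommGroup E] [Module ℝ E] [AddCommGroup Y] [Module ℝ Y] {X : Set E}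
    (hCC : Convex ℝ CC) (hX : ∀ p ∈ CC, p.1 ∈ X)
    (hf : ∀ x ∈ X, ∀ y ∈ X, ∀ a b : ℝ, 0 ≤ a → 0 ≤ b → a + b = 1 →
      f (a • x + b • y) ≤ (a : EReal) * f x + (b : EReal) * f y) :
    Convex ℝ (attainablePairs f CC) := by
  rintro ⟨s, r⟩ ⟨x, hx, hxr⟩ ⟨s', r'⟩ ⟨x', hx', hxr'⟩ a b ha hb hab
  refine ⟨a • x + b • x', hCC hx hx' ha hb hab, ?_⟩
  calc f (a • x + b • x') ≤ (a : EReal) * f x + (b : EReal) * f x' :=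
        hf x (hX _ hx) x' (hX _ hx') a b ha hb hab
    _ ≤ (a : EReal) * r + (b : EReal) * r' :=
        add_le_add (mul_le_mul_of_nonneg_left hxr (EReal.coe_nonneg.2 ha))
          (mul_le_mul_of_nonneg_left hxr' (EReal.coe_nonneg.2 hb))
    _ = ((a • (s, r) + b • (s', r')).2 : ℝ) := by simp

lemma mk_mem_closure_attainablePairs [TopologicalSpace Y] {s : Y} {v : ℝ}
    (hv : valueFn f CC s = v) : (s, v) ∈ closure (attainablePairs f CC) := by
  have hlim : Tendsto (fun r : ℝ => (s, r)) (nhdsWithin v (Set.Ioi v)) (nhds (s, v)) :=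
    tendsto_nhdsWithin_of_tendsto_nhds (Continuous.tendsto (by fun_prop) v)
  refine mem_closure_of_tendsto hlim (eventually_mem_nhdsWithin.mono fun r hr => ?_)
  have hlt : valueFn f CC s < (r : EReal) := hv ▸ EReal.coe_lt_coe_iff.2 hr
  simp only [valueFn, iInf_lt_iff] at hlt
  obtain ⟨x, hx, hxr⟩ := hlt
  exact ⟨x, hx, hxr.le⟩

variable [NormedAddCommGroup Y] [InnerProductSpace ℝ Y]

lemma isClosestSolution_closure_attainablePairs [AddCommGroup E] [Module ℝ E]
    (hCC : Convex ℝ CC) {sbar lbar : Y} {v : ℝ} (hv : valueFn f CC sbar = v)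
    (hmem : sbar ∈ closure {s | ∃ x, (x, s) ∈ CC})
    (hmin : ∀ s ∈ closure {s | ∃ x, (x, s) ∈ CC}, ‖sbar‖ ≤ ‖s‖)
    (hsub : ∀ s, (v : EReal) + ((⟪lbar, s - sbar⟫ : ℝ) : EReal) ≤ valueFn f CC s) :
    IsClosestSolution (closure (attainablePairs f CC)) sbar lbar v where
  mem := mk_mem_closure_attainablePairs hv
  add_inner_le := by
    have hclosed : IsClosed {p : Y × ℝ | v + ⟪lbar, p.1 - sbar⟫ ≤ p.2} :=
      isClosed_le (by fun_prop) (by fun_prop)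
    refine closure_minimal ?_ hclosed
    rintro ⟨s, r⟩ ⟨x, hx, hxr⟩
    exact_mod_cast ((hsub s).trans (valueFn_le hx)).trans hxr
  inner_nonneg := by
    have hclosed : IsClosed {p : Y × ℝ | 0 ≤ ⟪sbar, p.1 - sbar⟫} :=
      isClosed_le (by fun_prop) (by fun_prop)
    refine closure_minimal ?_ hclosed
    rintro ⟨s, r⟩ ⟨x, hx, -⟩
    have hconvex : Convex ℝ {s | ∃ x, (x, s) ∈ CC} := by
      rintro s₁ ⟨x₁, h₁⟩ s₂ ⟨x₂, h₂⟩ a b ha hb hab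
      exact ⟨a • x₁ + b • x₂, hCC h₁ h₂ ha hb hab⟩
    exact inner_sub_nonneg_of_norm_minimal hconvex.closure hmem hmin (subset_closure ⟨x, hx⟩)

lemma valueFn_eq_coe_of_subgradient {sbar lbar : Y} (hbot : valueFn f CC sbar ≠ ⊥)
    (hsub : ∀ s, valueFn f CC sbar + ((⟪lbar, s - sbar⟫ : ℝ) : EReal) ≤ valueFn f CC s)
    {x : E} {s : Y} (hx : (x, s) ∈ CC) (hfx : f x ≠ ⊤) : ∃ v : ℝ, valueFn f CC sbar = v := by
  refine ⟨_, (EReal.coe_toReal (fun htop => hfx ?_) hbot).symm⟩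
  have hle := (hsub s).trans (valueFn_le hx)
  rwa [htop, EReal.top_add_coe, top_le_iff] at hle

lemma ne_bot_of_subgradient {sbar lbar : Y} {v : ℝ}
    (hsub : ∀ s, (v : EReal) + ((⟪lbar, s - sbar⟫ : ℝ) : EReal) ≤ valueFn f CC s)
    {x : E} {s : Y} (hx : (x, s) ∈ CC) : f x ≠ ⊥ := by
  refine ne_bot_of_le_ne_bot ?_ ((hsub s).trans (valueFn_le hx))
  rw [← EReal.coe_add]
  exact EReal.coe_ne_bot _

/-- The augmented Lagrangian `L_g(x, s, l)` of the paper at `p = (x, s)`, without the constraint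
`p ∈ CC`. -/
def augLagrangianFn (f : E → EReal) (g : ℝ) (l : Y) (p : E × Y) : EReal :=
  f p.1 - ((⟪l, p.2⟫ : ℝ) : EReal) + ((g / 2 * ‖p.2‖ ^ 2 : ℝ) : EReal)

lemma augLagrangianFn_of_eq_coe {g r : ℝ} {l : Y} {x : E} {s : Y} (hx : f x = r) :
    augLagrangianFn f g l (x, s) = (augLagrangian g l (s, r) : ℝ) := by
  simp [augLagrangianFn, augLagrangian, hx]

lemma augLagrangianFn_le_of_le_coe {g r : ℝ} {l : Y} {x : E} {s : Y} (hx : f x ≤ r) :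
    augLagrangianFn f g l (x, s) ≤ (augLagrangian g l (s, r) : ℝ) := by
  rw [← augLagrangianFn_of_eq_coe (f := fun _ : E => (r : EReal)) (x := x) rfl]
  exact add_le_add_left (EReal.sub_le_sub hx le_rfl) _

lemma augLagrangianFn_le_coe_of_le_iInf_add {g e : ℝ} {l : Y} {q : E × Y}
    (hq : augLagrangianFn f g l q ≤ (⨅ p ∈ CC, augLagrangianFn f g l p) + (e : EReal))
    {p : Y × ℝ} (hp : p ∈ attainablePairs f CC) :
    augLagrangianFn f g l q ≤ ((augLagrangian g l p + e : ℝ) : EReal) := by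
  obtain ⟨x, hx, hxp⟩ := hp
  rw [EReal.coe_add]
  exact hq.trans (add_le_add_left ((iInf₂_le _ hx).trans (augLagrangianFn_le_of_le_coe hxp)) _)

lemma ne_top_of_augLagrangianFn_le_iInf_add (hne : (attainablePairs f CC).Nonempty) {g e : ℝ}
    {l : Y} {q : E × Y}
    (hq : augLagrangianFn f g l q ≤ (⨅ p ∈ CC, augLagrangianFn f g l p) + (e : EReal)) :
    f q.1 ≠ ⊤ := by
  obtain ⟨p, hp⟩ := hne
  intro htop
  have hle := augLagrangianFn_le_coe_of_le_iInf_add hq hp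
  rw [augLagrangianFn, htop, EReal.top_sub_coe, EReal.top_add_coe] at hle
  exact EReal.coe_ne_top _ (top_le_iff.1 hle)

lemma isIALM_closure_attainablePairs {γ ε : ℕ → ℝ} {xs : ℕ → E} {ss lam : ℕ → Y}
    (hγ : ∀ k, 0 < γ k) (hε : ∀ k, 0 ≤ ε (k + 1)) (hmem : ∀ k, (xs (k + 1), ss (k + 1)) ∈ CC)
    (hfin : ∀ k, f (xs (k + 1)) = ((f (xs (k + 1))).toReal : EReal))
    (hopt : ∀ k, augLagrangianFn f (γ k) (lam k) (xs (k + 1), ss (k + 1))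
      ≤ (⨅ p ∈ CC, augLagrangianFn f (γ k) (lam k) p)
        + ((ε (k + 1) ^ 2 / (2 * γ k) : ℝ) : EReal))
    (hlam : ∀ k, lam (k + 1) = lam k - γ k • ss (k + 1)) :
    IsIALM (closure (attainablePairs f CC)) γ ε ss (fun k => (f (xs k)).toReal) lam where
  penalty_pos := hγ
  error_nonneg := hε
  mem k := subset_closure ⟨xs (k + 1), hmem k, (hfin k).le⟩
  le_add_error k := by
    refine closure_minimal (fun p hp => ?_)
      (isClosed_le continuous_const (continuous_augLagrangian.add continuous_const))
    have hle := augLagrangianFn_le_coe_of_le_iInf_add (hopt k) hp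
    rw [augLagrangianFn_of_eq_coe (hfin k), EReal.coe_le_coe_iff] at hle
    exact hle
  multiplier_succ := hlam

end AttainablePairs

theorem statement17_general {E Y : Type*} [AddCommGroup E] [Module ℝ E]
    [NormedAddCommGroup Y] [InnerProductSpace ℝ Y] [CompleteSpace Y]
    {X : Set E} {K : Set Y} {f : E → EReal} (hf_top : ∃ x ∈ X, f x ≠ ⊤)
    (hf_cvx : ∀ x ∈ X, ∀ y ∈ X, ∀ a b : ℝ, 0 ≤ a → 0 ≤ b → a + b = 1 →
      f (a • x + b • y) ≤ (a : EReal) * f x + (b : EReal) * f y)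
    {C : E → Y} {CC : Set (E × Y)}
    (hCC : ∀ x s, (x, s) ∈ CC ↔ x ∈ X ∧ ∃ y ∈ K, s = C x - y) (hCCcv : Convex ℝ CC)
    {γ ε : ℕ → ℝ} (hγ : ∀ k, 0 < γ k) (hε : ∀ k, 0 ≤ ε (k + 1))
    {xs : ℕ → E} {ys ss lam : ℕ → Y}
    (hxs : ∀ k, xs (k + 1) ∈ X) (hys : ∀ k, ys (k + 1) ∈ K)
    (hss : ∀ k, ss (k + 1) = C (xs (k + 1)) - ys (k + 1))
    (hopt : ∀ k, augLagrangianFn f (γ k) (lam k) (xs (k + 1), ss (k + 1))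
      ≤ (⨅ p ∈ CC, augLagrangianFn f (γ k) (lam k) p)
        + ((ε (k + 1) ^ 2 / (2 * γ k) : ℝ) : EReal))
    (hlam : ∀ k, lam (k + 1) = lam k - γ k • ss (k + 1))
    (A1 : Summable ε)
    (A2 : (fun k => ε (k + 1) / γ k * penaltySum γ (k + 1))
      =O[atTop] fun k => 1 / √(penaltySum γ (k + 1)))
    (A3 : Summable fun k => (ε (k + 1) / γ (k + 1)) ^ 2 * penaltySum γ (k + 1))
    (A5 : Tendsto (penaltySum γ) atTop atTop)
    {sbar lbar : Y} (hsbar_mem : sbar ∈ closure {s | ∃ x, (x, s) ∈ CC})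
    (hsbar_min : ∀ s ∈ closure {s | ∃ x, (x, s) ∈ CC}, ‖sbar‖ ≤ ‖s‖)
    {projK : Y → Y} (hprojK : ∀ y, projK y ∈ K ∧ ∀ w ∈ K, ‖y - projK y‖ ≤ ‖y - w‖)
    (hnu_bot : valueFn f CC sbar ≠ ⊥)
    (hsub : ∀ s, valueFn f CC sbar + ((⟪lbar, s - sbar⟫ : ℝ) : EReal) ≤ valueFn f CC s) :
    Tendsto (fun k => f (xs k)) atTop (nhds (valueFn f CC sbar)) ∧
    (∃ M : ℝ, ∀ᶠ k in atTop,
      f (xs k) ≤ valueFn f CC sbar + ((M / √(penaltySum γ k) : ℝ) : EReal) ∧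
      valueFn f CC sbar ≤ f (xs k) + ((M / √(penaltySum γ k) : ℝ) : EReal)) ∧
    Tendsto (fun k => C (xs k) - ys k) atTop (nhds sbar) ∧
    ((fun k => ‖C (xs k) - ys k - sbar‖) =O[atTop] fun k => 1 / √(penaltySum γ k)) ∧
    ((fun k => ‖ys k - projK (C (xs k))‖) =O[atTop] fun k => 1 / √(penaltySum γ k)) := by
  obtain ⟨x₀, hx₀, hfx₀⟩ := hf_top
  have hproj {x : E} (hx : x ∈ X) : (x, C x - projK (C x)) ∈ CC :=
    (hCC _ _).2 ⟨hx, _, (hprojK _).1, rfl⟩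
  have hmem k : (xs (k + 1), ss (k + 1)) ∈ CC := (hCC _ _).2 ⟨hxs k, _, hys k, hss k⟩
  obtain ⟨v, hv⟩ := valueFn_eq_coe_of_subgradient hnu_bot hsub (hproj hx₀) hfx₀
  rw [hv] at hsub ⊢
  have hfin k : f (xs (k + 1)) = ((f (xs (k + 1))).toReal : EReal) :=
    (EReal.coe_toReal (ne_top_of_augLagrangianFn_le_iInf_add
      ⟨(_, _), x₀, hproj hx₀, EReal.le_coe_toReal hfx₀⟩ (hopt k))
      (ne_bot_of_subgradient hsub (hmem k))).symm
  have hialm := isIALM_closure_attainablePairs hγ hε hmem hfin hopt hlam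
  have hbar := isClosestSolution_closure_attainablePairs hCCcv hv hsbar_mem hsbar_min hsub
  have hconvex := (convex_attainablePairs hCCcv (fun p hp => ((hCC _ _).1 hp).1) hf_cvx).closure
  have hvalue := hialm.isBigO_value_sub hconvex isClosed_closure hbar A5 A1 A2 A3
  have hrate {b : ℕ → Y} := hialm.isBigO_sub_of_norm_le (b := b)
    (t := fun k => (f (xs k)).toReal) hconvex isClosed_closure hbar A5 A1 A2 A3
  have hresidual : (fun k => ‖C (xs k) - ys k - sbar‖) =O[atTop] fun k => 1 / √(penaltySum γ k) :=
    hrate (fun k => hss k ▸ hialm.mem k) fun k => (congrArg norm (hss k)).ge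
  have hprojection : (fun k => ‖C (xs k) - projK (C (xs k)) - sbar‖)
      =O[atTop] fun k => 1 / √(penaltySum γ k) :=
    hrate (fun k => subset_closure ⟨_, hproj (hxs k), (hfin k).le⟩)
      fun k => hss k ▸ (hprojK _).2 _ (hys k)
  have hfin_eventually : ∀ᶠ k in atTop, f (xs k) = ((f (xs k)).toReal : EReal) :=
    eventually_atTop.2 ⟨1, fun k hk => Nat.sub_add_cancel hk ▸ hfin (k - 1)⟩
  have hzero := tendsto_one_div_sqrt_zero A5
  exact ⟨tendsto_ereal_of_tendsto_toReal hfin_eventually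
      (tendsto_sub_nhds_zero_iff.1 (hvalue.trans_tendsto hzero)),
    exists_ereal_le_add_div_sqrt hfin_eventually hvalue,
    tendsto_iff_norm_sub_tendsto_zero.2 (hresidual.trans_tendsto hzero), hresidual,
    (hprojection.of_norm_left.sub hresidual.of_norm_left).norm_left.congr_left fun k => by
      congr 1; abel⟩

theorem statement17
    {E Y : Type*}
    [NormedAddCommGroup E] [InnerProductSpace ℝ E] [CompleteSpace E]
    [NormedAddCommGroup Y] [InnerProductSpace ℝ Y] [CompleteSpace Y]
    (X : Set E) (hXne : X.Nonempty) (hXcl : IsClosed X) (hXcv : Convex ℝ X)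
    (K : Set Y) (hKne : K.Nonempty) (hKcl : IsClosed K) (hKcv : Convex ℝ K)
    (f : E → EReal)
    (hf_bot : ∀ x : E, f x ≠ ⊥) (hf_top : ∃ x ∈ X, f x ≠ ⊤)
    (hf_dom : ∀ x : E, x ∉ X → f x = ⊤)
    (hf_lsc : LowerSemicontinuous f)
    (hf_cvx : ∀ x y : E, ∀ a b : ℝ, 0 ≤ a → 0 ≤ b → a + b = 1 →
      f (a • x + b • y) ≤ (a : EReal) * f x + (b : EReal) * f y)
    (C : E → Y) (CC : Set (E × Y))
    (hCC : ∀ (x : E) (sv : Y), (x, sv) ∈ CC ↔ x ∈ X ∧ ∃ yv ∈ K, sv = C x - yv)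
    (hCCne : CC.Nonempty) (hCCcl : IsClosed CC) (hCCcv : Convex ℝ CC)
    (hnu_bot : ∀ sv : Y, valueFn f CC sv ≠ ⊥)
    (γ : ℕ → ℝ) (hγ : ∀ k : ℕ, 0 < γ k) (ε : ℕ → ℝ) (hε : ∀ k : ℕ, 0 ≤ ε k)
    (xs : ℕ → E) (ys : ℕ → Y) (ss : ℕ → Y) (lam : ℕ → Y)
    (hxs : ∀ k : ℕ, xs (k+1) ∈ X) (hys : ∀ k : ℕ, ys (k+1) ∈ K)
    (hss : ∀ k : ℕ, ss (k+1) = C (xs (k+1)) - ys (k+1))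
    (hopt : ∀ k : ℕ,
      f (xs (k+1)) - ((⟪lam k, ss (k+1)⟫ : ℝ) : EReal)
          + ((γ k / 2 * ‖ss (k+1)‖ ^ 2 : ℝ) : EReal)
        ≤ (⨅ (p : E × Y) (_ : p ∈ CC),
              f p.1 - ((⟪lam k, p.2⟫ : ℝ) : EReal)
                + ((γ k / 2 * ‖p.2‖ ^ 2 : ℝ) : EReal))
          + ((ε (k+1) ^ 2 / (2 * γ k) : ℝ) : EReal))
    (hlam : ∀ k : ℕ, lam (k+1) = lam k - γ k • ss (k+1))
    (A1 : Summable ε)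
    (A2 : (fun k : ℕ => ε (k+1) / γ k * ∑ i ∈ Finset.range (k+1), γ i)
        =O[atTop] fun k : ℕ => 1 / Real.sqrt (∑ i ∈ Finset.range (k+1), γ i))
    (A3 : Summable fun k : ℕ => (ε (k+1) / γ (k+1)) ^ 2 * ∑ i ∈ Finset.range (k+1), γ i)
    (A4 : Summable fun k : ℕ => ε (k+1) / γ (k+1) * ∑ i ∈ Finset.range (k+1), γ i)
    (A5 : Tendsto (fun n : ℕ => ∑ i ∈ Finset.range n, γ i) atTop atTop)
    (sbar : Y)
    (hsbar_mem : sbar ∈ closure {sv : Y | ∃ x : E, (x, sv) ∈ CC})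
    (hsbar_min : ∀ sv ∈ closure {sv : Y | ∃ x : E, (x, sv) ∈ CC}, ‖sbar‖ ≤ ‖sv‖)
    (projK : Y → Y)
    (hprojK : ∀ v : Y, projK v ∈ K ∧ ∀ w ∈ K, ‖v - projK v‖ ≤ ‖v - w‖)
    (hsub : ∃ lbar : Y, ∀ sv : Y,
      valueFn f CC sbar + ((⟪lbar, sv - sbar⟫ : ℝ) : EReal) ≤ valueFn f CC sv) :
    Tendsto (fun k : ℕ => f (xs k)) atTop (nhds (valueFn f CC sbar)) ∧
    (∃ M : ℝ, ∀ᶠ k in atTop,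
      f (xs k) ≤ valueFn f CC sbar
          + ((M / Real.sqrt (∑ i ∈ Finset.range k, γ i) : ℝ) : EReal) ∧
      valueFn f CC sbar ≤ f (xs k)
          + ((M / Real.sqrt (∑ i ∈ Finset.range k, γ i) : ℝ) : EReal)) ∧
    Tendsto (fun k : ℕ => C (xs k) - ys k) atTop (nhds sbar) ∧
    ((fun k : ℕ => ‖C (xs k) - ys k - sbar‖) =O[atTop]
        fun k : ℕ => 1 / Real.sqrt (∑ i ∈ Finset.range k, γ i)) ∧
    ((fun k : ℕ => ‖ys k - projK (C (xs k))‖) =O[atTop]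
        fun k : ℕ => 1 / Real.sqrt (∑ i ∈ Finset.range k, γ i)) := by
  obtain ⟨lbar, hlbar⟩ := hsub
  exact statement17_general hf_top (fun x _ y _ => hf_cvx x y) hCC hCCcv hγ (fun k => hε (k + 1))
    hxs hys hss hopt hlam A1 A2 A3 A5 hsbar_mem hsbar_min hprojK (hnu_bot sbar) hlbar
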